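/- Let f be a higher energy function, strictly positive on (a,b), where a ∈ ℝ is a zero of f and b is the next zero of f to the right or b = +∞, and let P be the probability distribution on (a,b) with density proportional to f. Then there exist δ > 0 and C < ∞, independent of h, such that for every differentiable 1-Lipschitz function h and every x ∈ (a, a+δ): |g_h(x) − (1/3)(x−a)(h(x) − E_P[h])| ≤ C(x−a)², and |(f'(x)/f(x))·g_h(x) − (2/3)(h(x) − E_P[h])| ≤ C(x−a). -/

import Mathlib

/-!
Write `f t = (t - a) ^ 2 * k t`. The zeros of Hermite polynomials are simple (by
`He_{n+1}' = (n + 1) He_n` and descent on `n`), so `k` is smooth and `k a > 0` (`heFun_factor`).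
Hence, near `a`, the relative oscillation of `k` on `(a, x)` is `O(x - a)` and `k' / k` is bounded
(`exists_relative_bound`).

The Stein integral `∫_a^x f (h - E[h])` differs from `(h x - E[h]) ∫_a^x f` by at most
`(x - a) ∫_a^x f`, because `h` is 1-Lipschitz (`abs_integral_mul_sub_le`), while
`∫_a^x f = (x - a) ^ 3 / 3 * k x * (1 + O(x - a))` (`abs_integral_sub_le`). Dividing by
`f x = (x - a) ^ 2 * k x` gives the first estimate. The second follows from the first and
`f' / f = 2 / (x - a) + k' / k`.

The constants are uniform in `h` since `|h x - E[h]| ≤ |x - a| + E|s - a|` (`abs_sub_mean_le`);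
the first moment is finite because `f` is a polynomial times a Gaussian.
-/


open MeasureTheory Filter Set

noncomputable section

/-- The probabilists' Hermite polynomial `p_l(x) = (-1)^l e^{x^2/2} (d/dx)^l e^{-x^2/2}`
as a real function. -/
def hermiteFun (l : ℕ) (x : ℝ) : ℝ :=
  (-1 : ℝ) ^ l * Real.exp (x ^ 2 / 2) *
    iteratedDeriv l (fun t => Real.exp (-t ^ 2 / 2)) x

/-- The higher energy function of order `l` with normalizing constant `c`. -/
def heFun (l : ℕ) (c : ℝ) (x : ℝ) : ℝ :=
  c * hermiteFun l x ^ 2 * Real.exp (-x ^ 2 / 2)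

/-- `c` is the constant making `heFun l c` a probability density on `ℝ`. -/
def IsNormalizing (l : ℕ) (c : ℝ) : Prop :=
  0 < c ∧ (∫ x : ℝ, heFun l c x) = 1

/-- `(x n)_{n=1}^N` is an MIW sequence of `f` : strictly increasing, avoiding the
zeros of `f`, and satisfying the MIW recursion for `1 < n < N`. -/
def IsMIW (f : ℝ → ℝ) (N : ℕ) (x : ℕ → ℝ) : Prop :=
  (∀ n, 1 ≤ n → n < N → x n < x (n + 1)) ∧
  (∀ n, 1 ≤ n → n ≤ N → f (x n) ≠ 0) ∧
  (∀ n, 1 < n → n < N →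
    1 / (x (n + 1) - x n) - 1 / (x n - x (n - 1)) = deriv f (x n) / f (x n))

/-- Left boundary condition at `x_0 = -∞`. -/
def LeftBC (f : ℝ → ℝ) (x : ℕ → ℝ) : Prop :=
  1 / (x 2 - x 1) = deriv f (x 1) / f (x 1)

/-- Right boundary condition at `x_{N+1} = +∞`. -/
def RightBC (f : ℝ → ℝ) (N : ℕ) (x : ℕ → ℝ) : Prop :=
  -(1 / (x N - x (N - 1))) = deriv f (x N) / f (x N)

/-- Right boundary condition at a point (`none` denoting `+∞`). -/
def RightBCAt (f : ℝ → ℝ) (N : ℕ) (x : ℕ → ℝ) : Option ℝ → Prop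
  | none => -(1 / (x N - x (N - 1))) = deriv f (x N) / f (x N)
  | some b => x N < b ∧
      1 / (b - x N) - 1 / (x N - x (N - 1)) = deriv f (x N) / f (x N)

/-- `r 1 < ⋯ < r l` enumerates the zeros of `f`. -/
def ZeroEnum (f : ℝ → ℝ) (l : ℕ) (r : ℕ → ℝ) : Prop :=
  (∀ i j, 1 ≤ i → i < j → j ≤ l → r i < r j) ∧
  {y : ℝ | f y = 0} = r '' Set.Icc 1 l

/-- Membership in the region `R_k = (r_k, r_{k+1})`, with the conventions
`r_0 = -∞` and `r_{l+1} = +∞`. -/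
def InRegion (l : ℕ) (r : ℕ → ℝ) (k : ℕ) (t : ℝ) : Prop :=
  (k = 0 ∨ r k < t) ∧ (k = l ∨ t < r (k + 1))

/-- The region `R_k` as a subset of `ℝ`. -/
def regionSet (l : ℕ) (r : ℕ → ℝ) (k : ℕ) : Set ℝ := {t | InRegion l r k t}

/-- The number of points of `(x n)_{n=1}^N` lying in region `R_k`. -/
def regionCount (l : ℕ) (r : ℕ → ℝ) (N : ℕ) (x : ℕ → ℝ) (k : ℕ) : ℕ :=
  Set.ncard {n : ℕ | n ∈ Set.Icc 1 N ∧ InRegion l r k (x n)}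

/-- `n(t) = max {0 ≤ k ≤ N : x_k ≤ t}` (convention `x_0 = -∞`); for an increasing
sequence this is the number of points among `x_1, …, x_N` that are `≤ t`. -/
def nIdx (N : ℕ) (x : ℕ → ℝ) (t : ℝ) : ℕ :=
  Set.ncard {n : ℕ | n ∈ Set.Icc 1 N ∧ x n ≤ t}

/-- `1/(x_{n+1}-x_n) - 1/(x_n-x_{n-1})`, with the conventions `x_0 = -∞`,
`x_{N+1} = +∞` (so the corresponding reciprocals vanish). -/
def gapTerm (N : ℕ) (x : ℕ → ℝ) (n : ℕ) : ℝ :=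
  (if n < N then 1 / (x (n + 1) - x n) else 0) -
    (if 1 < n then 1 / (x n - x (n - 1)) else 0)

/-- The MIW energy `H(x_1,…,x_N)`. -/
def Hfun (N : ℕ) (x : ℕ → ℝ) : ℝ :=
  ∑ n ∈ Finset.Icc 1 N, x n ^ 2 + ∑ n ∈ Finset.Icc 1 N, gapTerm N x n ^ 2

/-- Partial derivative `∂H/∂x_n` evaluated at the configuration `x`. -/
def partialH (N : ℕ) (x : ℕ → ℝ) (n : ℕ) : ℝ :=
  deriv (fun s => Hfun N (Function.update x n s)) (x n)

/-- The empirical distribution `(1/N) ∑_{n=1}^N δ_{x_n}`. -/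
def empDist (N : ℕ) (x : ℕ → ℝ) : Measure ℝ :=
  (N : ENNReal)⁻¹ • ∑ n ∈ Finset.Icc 1 N, Measure.dirac (x n)

/-- The probability measure on `S` with density proportional to `f`. -/
def densMeasure (f : ℝ → ℝ) (S : Set ℝ) : Measure ℝ :=
  (volume.restrict S).withDensity fun t => ENNReal.ofReal (f t / ∫ u in S, f u)

/-- The Stein solution `g_h(x) = (1/f(x)) ∫_a^x f(t)(h(t) - E_P[h]) dt`, where the
integral runs over the part of `S` to the left of `x`. -/
def steinG (f : ℝ → ℝ) (S : Set ℝ) (h : ℝ → ℝ) (x : ℝ) : ℝ :=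
  (1 / f x) * ∫ t in S ∩ Set.Iio x, f t * (h t - ∫ s, h s ∂(densMeasure f S))

/-- The intermediate density `ρ(t) = 1/((N-1)(x_{n(t)+1} - x_{n(t)}))` on `(x_1, x_N)`. -/
def interDens (N : ℕ) (x : ℕ → ℝ) (t : ℝ) : ℝ :=
  Set.indicator (Set.Ioo (x 1) (x N))
    (fun u => 1 / (((N : ℝ) - 1) * (x (nIdx N x u + 1) - x (nIdx N x u)))) t

/-- The intermediate distribution `R` with density `ρ`. -/
def interDist (N : ℕ) (x : ℕ → ℝ) : Measure ℝ :=
  volume.withDensity fun t => ENNReal.ofReal (interDens N x t)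

/-! ### Hermite polynomials and the double zeros of `heFun` -/

/-- The Hermite function is the evaluation of Mathlib's Hermite polynomial. -/
lemma hermiteFun_eq (l : ℕ) (x : ℝ) :
    hermiteFun l x = ((Polynomial.hermite l).map (Int.castRingHom ℝ)).eval x := by
  have e : (fun t : ℝ => Real.exp (-t ^ 2 / 2)) = fun y : ℝ => Real.exp (-(y ^ 2 / 2)) := by
    funext t; congr 1; ring
  rw [hermiteFun, e, iteratedDeriv_eq_iterate, Polynomial.eval_map, ← algebraMap_int_eq,
    ← Polynomial.aeval_def, Polynomial.hermite_eq_deriv_gaussian']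
  ring

/-- The Hermite polynomials form an Appell sequence: `He_{n+1}' = (n+1) He_n`. -/
lemma derivative_hermite_succ (n : ℕ) :
    Polynomial.derivative (Polynomial.hermite (n + 1))
      = ((n : Polynomial ℤ) + 1) * Polynomial.hermite n := by
  induction n with
  | zero => simp [Polynomial.hermite_zero]
  | succ n ih =>
    rw [Polynomial.hermite_succ (n + 1), Polynomial.derivative_sub, Polynomial.derivative_mul, ih,
      Polynomial.derivative_mul]
    have h := Polynomial.hermite_succ n
    simp only [Polynomial.derivative_X, Polynomial.derivative_add, Polynomial.derivative_natCast,
      Polynomial.derivative_one]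
    push_cast
    linear_combination (-(n : Polynomial ℤ) - 1) * h

/-- The zeros of Hermite polynomials are simple: a common zero of `He_n` and `He_n'` would be a
common zero of `He_{n-1}` and `He_{n-1}'`, and so on down to `He_0 = 1`. -/
lemma hermite_simple_zero (n : ℕ) (a : ℝ)
    (h0 : Polynomial.aeval a (Polynomial.hermite n) = 0)
    (h1 : Polynomial.aeval a (Polynomial.derivative (Polynomial.hermite n)) = 0) : False := by
  induction n with
  | zero => simp [Polynomial.hermite_zero] at h0
  | succ n ih =>
    rw [derivative_hermite_succ] at h1
    have hn : ((n : ℝ) + 1) ≠ 0 := by positivity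
    have h2 : Polynomial.aeval a (Polynomial.hermite n) = 0 := by
      simpa [hn] using h1
    refine ih h2 ?_
    rw [Polynomial.hermite_succ] at h0
    simpa [h2] using h0

/-- A higher energy function vanishes to order exactly two at each of its zeros: the cofactor `k`
of `(t - a) ^ 2` is smooth and positive at `a`. -/
lemma heFun_factor {l : ℕ} {c a : ℝ} (hc : 0 < c) (ha : heFun l c a = 0) :
    ∃ k : ℝ → ℝ, ContDiff ℝ 1 k ∧ 0 < k a ∧ ∀ t, heFun l c t = (t - a) ^ 2 * k t := by
  set p := (Polynomial.hermite l).map (Int.castRingHom ℝ) with hp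
  have hpa : p.IsRoot a := by
    have := Real.exp_pos (-a ^ 2 / 2)
    simpa [heFun, hc.ne', this.ne', hermiteFun_eq] using ha
  obtain ⟨q, hq⟩ := Polynomial.dvd_iff_isRoot.mpr hpa
  have hqa : q.eval a ≠ 0 := by
    intro h
    refine hermite_simple_zero l a ?_ ?_
    · rw [Polynomial.aeval_def, algebraMap_int_eq, ← Polynomial.eval_map]
      exact hpa
    · rw [Polynomial.aeval_def, algebraMap_int_eq, ← Polynomial.eval_map,
        ← Polynomial.derivative_map, ← hp, hq]
      simp [h]
  refine ⟨fun t => c * q.eval t ^ 2 * Real.exp (-t ^ 2 / 2), ?_, by positivity, fun t => ?_⟩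
  · have : ContDiff ℝ 1 fun t => q.eval t := by
      simpa using Polynomial.contDiff_aeval (𝕜 := ℝ) q 1
    fun_prop
  · rw [heFun, hermiteFun_eq, ← hp, hq]
    simp only [Polynomial.eval_mul, Polynomial.eval_sub, Polynomial.eval_X, Polynomial.eval_C]
    ring

/-! ### The measure `densMeasure` and its first moment -/

lemma continuous_heFun (l : ℕ) (c : ℝ) : Continuous (heFun l c) := by
  have e : heFun l c = fun x =>
      c * ((Polynomial.hermite l).map (Int.castRingHom ℝ)).eval x ^ 2 *
        Real.exp (-x ^ 2 / 2) := by
    funext x; rw [heFun, hermiteFun_eq]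
  rw [e]; fun_prop

lemma integrable_polynomial_mul_gaussian (p : Polynomial ℝ) :
    Integrable fun x : ℝ => p.eval x * Real.exp (-x ^ 2 / 2) := by
  induction p using Polynomial.induction_on' with
  | add p q hp hq =>
    refine (hp.add hq).congr (ae_of_all _ fun x => ?_)
    simp [add_mul]
  | monomial n r =>
    have h := (integrable_rpow_mul_exp_neg_mul_sq (b := 1 / 2) (by norm_num) (s := n)
      (by have : (0 : ℝ) ≤ n := by positivity
          linarith)).const_mul r
    refine h.congr (ae_of_all _ fun x => ?_)
    have e : -(1 / 2 : ℝ) * x ^ 2 = -x ^ 2 / 2 := by ring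
    simp only [Polynomial.eval_monomial, Real.rpow_natCast, e, mul_assoc]

lemma integrable_heFun_mul_polynomial (l : ℕ) (c : ℝ) (p : Polynomial ℝ) :
    Integrable fun x : ℝ => heFun l c x * p.eval x := by
  refine (integrable_polynomial_mul_gaussian
    (Polynomial.C c * ((Polynomial.hermite l).map (Int.castRingHom ℝ)) ^ 2 * p)).congr
      (ae_of_all _ fun x => ?_)
  simp only [heFun, hermiteFun_eq, Polynomial.eval_mul, Polynomial.eval_C, Polynomial.eval_pow]
  ring

lemma integral_pos_of_isOpen {f : ℝ → ℝ} {S : Set ℝ} (hS : IsOpen S) (hne : S.Nonempty)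
    (hf : IntegrableOn f S) (hpos : ∀ t ∈ S, 0 < f t) : 0 < ∫ u in S, f u := by
  rw [setIntegral_pos_iff_support_of_nonneg_ae
    (ae_restrict_of_forall_mem hS.measurableSet fun t ht => (hpos t ht).le) hf]
  have : Function.support f ∩ S = S := inter_eq_right.mpr fun t ht => (hpos t ht).ne'
  rw [this]
  exact hS.measure_pos _ hne

lemma isProbabilityMeasure_densMeasure {f : ℝ → ℝ} {S : Set ℝ} (hS : IsOpen S)
    (hne : S.Nonempty) (hf : IntegrableOn f S) (hpos : ∀ t ∈ S, 0 < f t) :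
    IsProbabilityMeasure (densMeasure f S) := by
  have hZ := integral_pos_of_isOpen hS hne hf hpos
  constructor
  rw [densMeasure, withDensity_apply _ MeasurableSet.univ, Measure.restrict_univ,
    ← ofReal_integral_eq_lintegral_ofReal (hf.div_const _)
      (ae_restrict_of_forall_mem hS.measurableSet fun t ht => (div_pos (hpos t ht) hZ).le),
    integral_div, div_self hZ.ne', ENNReal.ofReal_one]

lemma integrable_id_densMeasure {f : ℝ → ℝ} {S : Set ℝ} (hS : IsOpen S)
    (hne : S.Nonempty) (hfc : Continuous f) (hf : IntegrableOn f S) (hpos : ∀ t ∈ S, 0 < f t)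
    (hf1 : Integrable fun t => f t * t) :
    Integrable (fun s : ℝ => s) (densMeasure f S) := by
  have hZ := integral_pos_of_isOpen hS hne hf hpos
  rw [densMeasure, integrable_withDensity_iff (by fun_prop) (by simp)]
  refine (hf1.integrableOn.div_const (∫ u in S, f u) : Integrable _ (volume.restrict S)).congr
    (ae_restrict_of_forall_mem hS.measurableSet fun t ht => ?_)
  simp only [ENNReal.toReal_ofReal (div_pos (hpos t ht) hZ).le]
  ring

/-- A 1-Lipschitz function stays within `|x - a| + E|s - a|` of its mean, a bound that does not
depend on the function. -/
lemma abs_sub_mean_le {μ : Measure ℝ} [IsProbabilityMeasure μ]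
    (hμ : Integrable (fun s : ℝ => s) μ) {h : ℝ → ℝ} (hh : LipschitzWith 1 h) (a x : ℝ) :
    |h x - ∫ s, h s ∂μ| ≤ |x - a| + ∫ s, |s - a| ∂μ := by
  have hlip : ∀ s t, |h s - h t| ≤ |s - t| := fun s t => by
    simpa [Real.dist_eq] using hh.dist_le_mul s t
  have hia : Integrable (fun s : ℝ => |s - a|) μ := (hμ.sub (integrable_const a)).abs
  have hd : Integrable (fun s => h x - h s) μ := by
    refine ((integrable_const |x - a|).add hia).mono'
      (continuous_const.sub hh.continuous).aestronglyMeasurable (ae_of_all _ fun s => ?_)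
    rw [Real.norm_eq_abs, Pi.add_apply, abs_sub_comm s a]
    exact (hlip x s).trans (abs_sub_le x a s)
  have hhi : Integrable h μ := by
    refine ((integrable_const (h x)).sub hd).congr (ae_of_all _ fun s => ?_)
    simp
  have e : h x - ∫ s, h s ∂μ = ∫ s, (h x - h s) ∂μ := by
    rw [integral_sub (integrable_const _) hhi]; simp
  have e2 : |x - a| + ∫ s, |s - a| ∂μ = ∫ s, (|x - a| + |s - a|) ∂μ := by
    rw [integral_add (integrable_const _) hia]; simp
  rw [e, e2]
  refine norm_integral_le_of_norm_le (f := fun s => h x - h s) (g := fun s => |x - a| + |s - a|)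
    ((integrable_const _).add hia) (ae_of_all _ fun s => ?_)
  rw [Real.norm_eq_abs, abs_sub_comm s a]
  exact (hlip x s).trans (abs_sub_le x a s)

/-! ### Local estimates near the zero -/

/-- The mass of `f` on `(a, x)` agrees with `(x - a) ^ 3 / 3 * k x` up to a relative error of
order `x - a`. -/
lemma abs_integral_sub_le {f k : ℝ → ℝ} {a x Λ : ℝ} (hax : a ≤ x) (hk : Continuous k)
    (hf : ∀ t, f t = (t - a) ^ 2 * k t)
    (hosc : ∀ t ∈ Ioc a x, |k t - k x| ≤ Λ * k x * (x - a)) :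
    |(∫ t in a..x, f t) - (x - a) ^ 3 / 3 * k x| ≤ Λ * k x * (x - a) ^ 4 / 3 := by
  have hI : ∀ r : ℝ, ∫ t in a..x, (t - a) ^ 2 * r = (x - a) ^ 3 / 3 * r := fun r => by
    rw [intervalIntegral.integral_mul_const,
      intervalIntegral.integral_comp_sub_right (fun t => t ^ 2), integral_pow]
    norm_num
  have e : (∫ t in a..x, f t) - (x - a) ^ 3 / 3 * k x
      = ∫ t in a..x, (t - a) ^ 2 * (k t - k x) := by
    rw [← hI, ← intervalIntegral.integral_sub]
    · exact intervalIntegral.integral_congr fun t _ => by simp only [hf]; ring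
    · rw [show f = fun t => (t - a) ^ 2 * k t from funext hf]
      exact Continuous.intervalIntegrable (by fun_prop) _ _
    · exact Continuous.intervalIntegrable (by fun_prop) _ _
  have hb := intervalIntegral.norm_integral_le_of_norm_le hax
    (f := fun t => (t - a) ^ 2 * (k t - k x)) (g := fun t => (t - a) ^ 2 * (Λ * k x * (x - a)))
    (μ := volume) (ae_of_all _ fun t ht => ?_) (Continuous.intervalIntegrable (by fun_prop) _ _)
  · rw [e, ← Real.norm_eq_abs]
    refine hb.trans_eq ?_
    rw [hI]; ring
  · rw [norm_mul, Real.norm_eq_abs, Real.norm_eq_abs, abs_of_nonneg (sq_nonneg (t - a))]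
    exact mul_le_mul_of_nonneg_left (hosc t ht) (sq_nonneg _)

/-- Freezing a 1-Lipschitz `h` at the right endpoint costs at most `x - a` times the mass. -/
lemma abs_integral_mul_sub_le {f h : ℝ → ℝ} {a x m : ℝ} (hax : a ≤ x) (hf : Continuous f)
    (hpos : ∀ t ∈ Ioc a x, 0 ≤ f t) (hh : LipschitzWith 1 h) :
    |(∫ t in a..x, f t * (h t - m)) - (h x - m) * ∫ t in a..x, f t|
      ≤ (x - a) * ∫ t in a..x, f t := by
  have hhc := hh.continuous
  have e : (∫ t in a..x, f t * (h t - m)) - (h x - m) * ∫ t in a..x, f t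
      = ∫ t in a..x, f t * (h t - h x) := by
    rw [← intervalIntegral.integral_const_mul, ← intervalIntegral.integral_sub]
    · exact intervalIntegral.integral_congr fun t _ => by ring
    · exact Continuous.intervalIntegrable (by fun_prop) _ _
    · exact Continuous.intervalIntegrable (by fun_prop) _ _
  rw [e, ← intervalIntegral.integral_const_mul, ← Real.norm_eq_abs]
  refine intervalIntegral.norm_integral_le_of_norm_le hax (ae_of_all _ fun t ht => ?_)
    (Continuous.intervalIntegrable (by fun_prop) _ _)
  rw [norm_mul, Real.norm_eq_abs, Real.norm_eq_abs, abs_of_nonneg (hpos t ht), mul_comm]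
  refine mul_le_mul_of_nonneg_right ?_ (hpos t ht)
  have h1 : |h t - h x| ≤ |t - x| := by simpa [Real.dist_eq] using hh.dist_le_mul t x
  rw [abs_sub_comm t x, abs_of_nonneg (sub_nonneg.mpr ht.2)] at h1
  linarith [ht.1]

/-- The final arithmetic. Here `u = x - a`, `f x = u ^ 2 * k`, `d = h x - E[h]`, `F` is the mass
and `I` the Stein integral on `(a, x)`, and `k'` is the derivative of the cofactor `k`. -/
lemma stein_arith {u k k' d F I M Λ : ℝ} (hu : 0 < u) (hu1 : u ≤ 1) (hk : 0 < k) (hΛ : 0 ≤ Λ)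
    (hd : |d| ≤ M) (hF : |F - u ^ 3 / 3 * k| ≤ Λ * k * u ^ 4 / 3) (hI : |I - d * F| ≤ u * F)
    (hk' : |k'| ≤ Λ * k) :
    |1 / (u ^ 2 * k) * I - 1 / 3 * u * d| ≤ ((1 + Λ * (1 + M)) / 3) * u ^ 2 ∧
    |(2 * u * k + u ^ 2 * k') / (u ^ 2 * k) * (1 / (u ^ 2 * k) * I) - 2 / 3 * d|
      ≤ (2 * ((1 + Λ * (1 + M)) / 3) + Λ * (M / 3 + (1 + Λ * (1 + M)) / 3)) * u := by
  have hM : 0 ≤ M := (abs_nonneg d).trans hd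
  set C := (1 + Λ * (1 + M)) / 3 with hC
  have hC0 : 0 ≤ C := by positivity
  set G := 1 / (u ^ 2 * k) * I with hG
  have hIG : I = u ^ 2 * k * G := by rw [hG]; field_simp
  have hmain : |I - d * (u ^ 3 / 3 * k)| ≤ C * u ^ 2 * (u ^ 2 * k) := by
    have e : I - d * (u ^ 3 / 3 * k) = (I - d * F) + d * (F - u ^ 3 / 3 * k) := by ring
    have h1 : F ≤ u ^ 3 / 3 * k + Λ * k * u ^ 4 / 3 := by linarith [(abs_le.mp hF).2]
    have h2 : |d * (F - u ^ 3 / 3 * k)| ≤ M * (Λ * k * u ^ 4 / 3) := by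
      rw [abs_mul]; exact mul_le_mul hd hF (abs_nonneg _) hM
    have h3 : u * F ≤ u * (u ^ 3 / 3 * k + Λ * k * u ^ 4 / 3) :=
      mul_le_mul_of_nonneg_left h1 hu.le
    have h4 : u * (Λ * k * u ^ 4 / 3) ≤ 1 * (Λ * k * u ^ 4 / 3) :=
      mul_le_mul_of_nonneg_right hu1 (by positivity)
    calc |I - d * (u ^ 3 / 3 * k)| ≤ |I - d * F| + |d * (F - u ^ 3 / 3 * k)| := by
            rw [e]; exact abs_add_le _ _
      _ ≤ C * u ^ 2 * (u ^ 2 * k) := by rw [hC]; nlinarith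
  have hfirst : |G - 1 / 3 * u * d| ≤ C * u ^ 2 := by
    have hp : 0 < u ^ 2 * k := by positivity
    have e : I - d * (u ^ 3 / 3 * k) = (G - 1 / 3 * u * d) * (u ^ 2 * k) := by rw [hIG]; ring
    rw [e, abs_mul, abs_of_pos hp] at hmain
    exact le_of_mul_le_mul_right hmain hp
  refine ⟨hfirst, ?_⟩
  have e : (2 * u * k + u ^ 2 * k') / (u ^ 2 * k) * G - 2 / 3 * d
      = 2 / u * (G - 1 / 3 * u * d) + k' / k * G := by field_simp; ring
  have hGb : |G| ≤ (M / 3 + C) * u := by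
    have h1 : |1 / 3 * u * d| ≤ 1 / 3 * u * M := by
      rw [abs_mul, abs_of_pos (by positivity : 0 < 1 / 3 * u)]
      exact mul_le_mul_of_nonneg_left hd (by positivity)
    have h2 := abs_add_le (G - 1 / 3 * u * d) (1 / 3 * u * d)
    rw [sub_add_cancel] at h2
    have h3 : C * u ^ 2 ≤ C * u := mul_le_mul_of_nonneg_left (by nlinarith) hC0
    linarith
  have h1 : |2 / u * (G - 1 / 3 * u * d)| ≤ 2 * C * u := by
    rw [abs_mul, abs_of_pos (by positivity : 0 < 2 / u)]
    refine (mul_le_mul_of_nonneg_left hfirst (by positivity)).trans_eq ?_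
    field_simp
  have h2 : |k' / k * G| ≤ Λ * ((M / 3 + C) * u) := by
    rw [abs_mul, abs_div, abs_of_pos hk]
    exact mul_le_mul ((div_le_iff₀ hk).mpr hk') hGb (abs_nonneg _) hΛ
  rw [e]
  linarith [abs_add_le (2 / u * (G - 1 / 3 * u * d)) (k' / k * G)]

/-- Just to the right of a point where it is positive, a `C¹` function has bounded
logarithmic derivative and relative oscillation at most proportional to the distance. -/
lemma exists_relative_bound {k : ℝ → ℝ} {a : ℝ} (hk : ContDiff ℝ 1 k) (hka : 0 < k a) :
    ∃ δ > 0, δ ≤ 1 ∧ ∃ Λ ≥ 0, ∀ x ∈ Ioo a (a + δ), 0 < k x ∧ |deriv k x| ≤ Λ * k x ∧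
      ∀ t ∈ Ioc a x, |k t - k x| ≤ Λ * k x * (x - a) := by
  obtain ⟨ε, hε, hball⟩ := Metric.eventually_nhds_iff.mp
    (hk.continuous.continuousAt.eventually (lt_mem_nhds (half_lt_self hka)))
  obtain ⟨L, hL⟩ := (isCompact_Icc (a := a) (b := a + 1)).exists_bound_of_continuousOn
    (hk.continuous_deriv le_rfl).continuousOn
  have hL0 : 0 ≤ L := (norm_nonneg _).trans (hL a ⟨le_rfl, by linarith⟩)
  refine ⟨min ε 1, lt_min hε one_pos, min_le_right _ _, L / (k a / 2), by positivity,
    fun x hx => ?_⟩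
  have hx1 : x < a + 1 := hx.2.trans_le (by linarith [min_le_right ε 1])
  have hkx : k a / 2 < k x := hball (by
    rw [Real.dist_eq, abs_of_pos (sub_pos.mpr hx.1)]
    linarith [hx.2, min_le_left ε 1])
  have hLk : L ≤ L / (k a / 2) * k x := by
    rw [div_mul_eq_mul_div, le_div_iff₀ (by positivity)]
    exact mul_le_mul_of_nonneg_left hkx.le hL0
  refine ⟨by linarith, (hL x ⟨hx.1.le, hx1.le⟩).trans hLk, fun t ht => ?_⟩
  have h1 := (convex_Icc a (a + 1)).norm_image_sub_le_of_norm_deriv_le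
    (fun y _ => (hk.differentiable one_ne_zero) y) hL
    (x := x) (y := t) ⟨hx.1.le, hx1.le⟩ ⟨ht.1.le, by linarith [ht.2]⟩
  rw [Real.norm_eq_abs, Real.norm_eq_abs, abs_sub_comm t x,
    abs_of_nonneg (sub_nonneg.mpr ht.2)] at h1
  calc |k t - k x| ≤ L * (x - t) := h1
    _ ≤ L * (x - a) := mul_le_mul_of_nonneg_left (by linarith [ht.1]) hL0
    _ ≤ _ := mul_le_mul_of_nonneg_right hLk (by linarith [hx.1])

/-! ### The asymptotics of the Stein solution -/

theorem steinG_asymptotics_near_zero (l : ℕ) (c : ℝ) (hc : IsNormalizing l c)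
    (a : ℝ) (ha : heFun l c a = 0)
    (b : EReal) (hab : (a : EReal) < b)
    (hb : b = ⊤ ∨ ∃ b' : ℝ, b = (b' : EReal) ∧ heFun l c b' = 0)
    (S : Set ℝ) (hS : S = {t : ℝ | (a : EReal) < (t : EReal) ∧ (t : EReal) < b})
    (hpos : ∀ t ∈ S, 0 < heFun l c t) :
    ∃ δ > (0 : ℝ), ∃ C : ℝ,
      ∀ h : ℝ → ℝ, Differentiable ℝ h → LipschitzWith 1 h →
        ∀ x ∈ S, x < a + δ →
          |steinG (heFun l c) S h x
              - (1 / 3) * (x - a) * (h x - ∫ s, h s ∂(densMeasure (heFun l c) S))|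
            ≤ C * (x - a) ^ 2 ∧
          |(deriv (heFun l c) x / heFun l c x) * steinG (heFun l c) S h x
              - (2 / 3) * (h x - ∫ s, h s ∂(densMeasure (heFun l c) S))|
            ≤ C * (x - a) := by
  set f := heFun l c with hfdef
  have hSo : IsOpen S := by
    rw [hS]
    exact (isOpen_Ioo (a := (a : EReal)) (b := b)).preimage continuous_coe_real_ereal
  have hne : S.Nonempty := by
    obtain ⟨y, hy1, hy2⟩ := EReal.lt_iff_exists_real_btwn.mp hab
    exact ⟨y, by rw [hS]; exact ⟨hy1, hy2⟩⟩
  have hfc : Continuous f := continuous_heFun l c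
  have hfi : IntegrableOn f S := by
    simpa using (integrable_heFun_mul_polynomial l c 1).integrableOn (s := S)
  have hf1 : Integrable fun t => f t * t := by
    simpa using integrable_heFun_mul_polynomial l c Polynomial.X
  have : IsProbabilityMeasure (densMeasure f S) :=
    isProbabilityMeasure_densMeasure hSo hne hfi hpos
  have hid := integrable_id_densMeasure hSo hne hfc hfi hpos hf1
  obtain ⟨k, hk, hka, hfk⟩ := heFun_factor hc.1 ha
  rw [← hfdef] at hfk
  obtain ⟨δ, hδ, hδ1, Λ, hΛ, hrel⟩ := exists_relative_bound hk hka
  set M := 1 + ∫ s, |s - a| ∂(densMeasure f S) with hM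
  have hM0 : 0 ≤ M := by
    have : 0 ≤ ∫ s, |s - a| ∂(densMeasure f S) := integral_nonneg fun _ => abs_nonneg _
    linarith
  refine ⟨δ, hδ, 2 * ((1 + Λ * (1 + M)) / 3) + Λ * (M / 3 + (1 + Λ * (1 + M)) / 3),
    fun h _ hh x hxS hxδ => ?_⟩
  have hxS' := hxS
  rw [hS] at hxS'
  have hax : a < x := EReal.coe_lt_coe_iff.mp hxS'.1
  obtain ⟨hkx, hk', hosc⟩ := hrel x ⟨hax, hxδ⟩
  have hset : S ∩ Iio x = Ioo a x := by
    ext t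
    rw [hS]
    constructor
    · rintro ⟨⟨h1, -⟩, h2⟩
      exact ⟨EReal.coe_lt_coe_iff.mp h1, h2⟩
    · rintro ⟨h1, h2⟩
      exact ⟨⟨EReal.coe_lt_coe_iff.mpr h1, (EReal.coe_lt_coe_iff.mpr h2).trans hxS'.2⟩, h2⟩
  have hfpos : ∀ t ∈ Ioc a x, 0 ≤ f t := by
    intro t ht
    refine (hpos t ?_).le
    rw [hS]
    exact ⟨EReal.coe_lt_coe_iff.mpr ht.1, (EReal.coe_le_coe_iff.mpr ht.2).trans_lt hxS'.2⟩
  have hG : steinG f S h x = 1 / ((x - a) ^ 2 * k x) *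
      ∫ t in a..x, f t * (h t - ∫ s, h s ∂(densMeasure f S)) := by
    rw [steinG, hset, hfk, intervalIntegral.integral_of_le hax.le, integral_Ioc_eq_integral_Ioo]
  have hderiv : deriv f x = 2 * (x - a) * k x + (x - a) ^ 2 * deriv k x := by
    have h1 : HasDerivAt (fun t => (t - a) ^ 2 * k t)
        (2 * (x - a) * k x + (x - a) ^ 2 * deriv k x) x := by
      have h2 : HasDerivAt (fun t => (t - a) ^ 2) (2 * (x - a)) x := by
        simpa using ((hasDerivAt_id' x).sub_const a).fun_pow 2
      exact h2.mul ((hk.differentiable one_ne_zero) x).hasDerivAt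
    rw [← h1.deriv]
    congr 1
    exact funext hfk
  have hd : |h x - ∫ s, h s ∂(densMeasure f S)| ≤ M := by
    refine (abs_sub_mean_le hid hh a x).trans ?_
    rw [abs_of_pos (sub_pos.mpr hax)]
    linarith
  have key := stein_arith (sub_pos.mpr hax) (by linarith) hkx hΛ hd
    (abs_integral_sub_le hax.le hk.continuous hfk hosc)
    (abs_integral_mul_sub_le (m := ∫ s, h s ∂(densMeasure f S)) hax.le hfc hfpos hh) hk'
  rw [hderiv, hG, hfk x]
  refine ⟨key.1.trans (mul_le_mul_of_nonneg_right ?_ (sq_nonneg _)), key.2⟩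
  have h1 : 0 ≤ (1 + Λ * (1 + M)) / 3 := by positivity
  have h2 : 0 ≤ Λ * (M / 3 + (1 + Λ * (1 + M)) / 3) := by positivity
  linarith
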